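/- Let (X,ρ) be a separable metric space, μ a Borel probability measure on X, q ∈ ℝ, and ξ ∈ Φ_D a blanketed premeasure. Assume either q ≤ 0, or q > 0 and μ is blanketed. Then there exists a constant β > 0 such that for every E ⊆ X, β · H^{q,ξ}_μ(E) ≤ W^{q,ξ}_μ(E). In particular, H^{q,ξ}_μ(E) = +∞ if and only if W^{q,ξ}_μ(E) = +∞. -/

import Mathlib

open Metric MeasureTheory Set Filter TopologicalSpace
open scoped ENNReal NNReal Classical

noncomputable section

/-- `x ^ q` for extended nonnegative reals, with the paper's convention
`0 ^ q = ∞` for `q ≤ 0`. -/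
def epow (x : ℝ≥0∞) (q : ℝ) : ℝ≥0∞ := if x = 0 ∧ q ≤ 0 then ∞ else x ^ q

variable {X X' : Type*}

section Defs

variable [MetricSpace X] [MetricSpace X']

/-- A premeasure on a metric space: an increasing `[0,∞]`-valued function on the family of
closed balls, vanishing on the empty set. -/
def IsPremeasure (ξ : Set X → ℝ≥0∞) : Prop :=
  ξ ∅ = 0 ∧ ∀ (x : X) (r : ℝ) (x' : X) (r' : ℝ),
    closedBall x r ⊆ closedBall x' r' → ξ (closedBall x r) ≤ ξ (closedBall x' r')

/-- The doubling ("blanketed") condition defining the class `Φ_D` of premeasures: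
`ξ(B(x,2r)) ≤ K ξ(B(x,r))` for some constant `K > 1`, all `x` and all `0 < r ≤ 1`. -/
def PremeasureBlanketed (ξ : Set X → ℝ≥0∞) : Prop :=
  ∃ K : ℝ≥0, 1 < K ∧ ∀ (x : X) (r : ℝ), 0 < r → r ≤ 1 →
    ξ (closedBall x (2 * r)) ≤ (K : ℝ≥0∞) * ξ (closedBall x r)

variable [MeasurableSpace X] [MeasurableSpace X']

/-- The support of a Borel measure on a metric space. -/
def measSupport (μ : Measure X) : Set X := {x : X | ∀ r : ℝ, 0 < r → 0 < μ (ball x r)}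

/-- A blanketed (doubling) measure: for some `a > 1`,
`limsup_{r → 0⁺} sup_{x ∈ supp μ} μ(B(x,ar)) / μ(B(x,r)) < ∞`. -/
def MeasureBlanketed (μ : Measure X) : Prop :=
  ∃ a : ℝ, 1 < a ∧
    limsup (fun r : ℝ => ⨆ x ∈ measSupport μ,
      μ (closedBall x (a * r)) / μ (closedBall x r)) (nhdsWithin 0 (Ioi 0)) < ∞

/-- The quantity `μ(B)^q ξ(B)` attached to a ball `B`. -/
def ballWeight (μ : Measure X) (q : ℝ) (ξ : Set X → ℝ≥0∞) (B : Set X) : ℝ≥0∞ :=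
  epow (μ B) q * ξ B

/-- A centered `δ`-cover of `E`: countably many closed balls centered in `E`, of diameters
at most `2δ`, covering `E`. -/
def IsCenteredCover (E : Set X) (δ : ℝ) (c : ℕ → X) (r : ℕ → ℝ) : Prop :=
  (∀ i, c i ∈ E) ∧ (∀ i, diam (closedBall (c i) (r i)) ≤ 2 * δ) ∧
    E ⊆ ⋃ i, closedBall (c i) (r i)

/-- The pre-Hausdorff quantity `H^{q,ξ}_{μ,δ}(E)`. -/
def Hd (μ : Measure X) (q : ℝ) (ξ : Set X → ℝ≥0∞) (δ : ℝ) (E : Set X) : ℝ≥0∞ :=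
  if E = ∅ then 0 else
    ⨅ (c : ℕ → X) (r : ℕ → ℝ) (_ : IsCenteredCover E δ c r),
      ∑' i, ballWeight μ q ξ (closedBall (c i) (r i))

/-- `H^{q,ξ}_{μ,0}(E) = sup_{δ > 0} H^{q,ξ}_{μ,δ}(E)`. -/
def H0 (μ : Measure X) (q : ℝ) (ξ : Set X → ℝ≥0∞) (E : Set X) : ℝ≥0∞ :=
  ⨆ (δ : ℝ) (_ : 0 < δ), Hd μ q ξ δ E

/-- The generalized Hausdorff measure `H^{q,ξ}_μ(E) = sup_{F ⊆ E} H^{q,ξ}_{μ,0}(F)`. -/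
def HM (μ : Measure X) (q : ℝ) (ξ : Set X → ℝ≥0∞) (E : Set X) : ℝ≥0∞ :=
  ⨆ (F : Set X) (_ : F ⊆ E), H0 μ q ξ F

/-- A weighted and centered `δ`-cover of `E`: countably many pairs `(w i, B i)` of nonnegative
weights and closed balls centered in `E` of diameters at most `2δ`, with
`Σ {w i : x ∈ B i} ≥ 1` for every `x ∈ E`. -/
def IsWeightedCover (E : Set X) (δ : ℝ) (w : ℕ → ℝ≥0) (c : ℕ → X) (r : ℕ → ℝ) : Prop :=
  (∀ i, c i ∈ E) ∧ (∀ i, diam (closedBall (c i) (r i)) ≤ 2 * δ) ∧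
    ∀ x ∈ E, 1 ≤ ∑' i, (if x ∈ closedBall (c i) (r i) then (w i : ℝ≥0∞) else 0)

/-- The pre-weighted-Hausdorff quantity `W^{q,ξ}_{μ,δ}(E)`. -/
def Wd (μ : Measure X) (q : ℝ) (ξ : Set X → ℝ≥0∞) (δ : ℝ) (E : Set X) : ℝ≥0∞ :=
  if E = ∅ then 0 else
    ⨅ (w : ℕ → ℝ≥0) (c : ℕ → X) (r : ℕ → ℝ) (_ : IsWeightedCover E δ w c r),
      ∑' i, (w i : ℝ≥0∞) * ballWeight μ q ξ (closedBall (c i) (r i))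

/-- `W^{q,ξ}_{μ,0}(E) = sup_{δ > 0} W^{q,ξ}_{μ,δ}(E)`. -/
def W0 (μ : Measure X) (q : ℝ) (ξ : Set X → ℝ≥0∞) (E : Set X) : ℝ≥0∞ :=
  ⨆ (δ : ℝ) (_ : 0 < δ), Wd μ q ξ δ E

/-- The weighted generalized Hausdorff measure `W^{q,ξ}_μ(E) = sup_{F ⊆ E} W^{q,ξ}_{μ,0}(F)`. -/
def WM (μ : Measure X) (q : ℝ) (ξ : Set X → ℝ≥0∞) (E : Set X) : ℝ≥0∞ :=
  ⨆ (F : Set X) (_ : F ⊆ E), W0 μ q ξ F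

/-- Hypothesis (H) for `(X, ξ, μ)`: for every `ε > 0`, `X` can be covered by countably many
closed balls of diameters `< ε` on which `μ(B)^q ξ(B)` is finite. -/
def HypH (μ : Measure X) (q : ℝ) (ξ : Set X → ℝ≥0∞) : Prop :=
  ∀ ε : ℝ, 0 < ε → ∃ (c : ℕ → X) (r : ℕ → ℝ),
    (univ : Set X) ⊆ (⋃ i, closedBall (c i) (r i)) ∧
    (∀ i, diam (closedBall (c i) (r i)) < ε) ∧
    ∀ i, ballWeight μ q ξ (closedBall (c i) (r i)) < ∞

/-- The product premeasure `ξ₀(B × B') = ξ(B) ξ'(B')` on the product space (whose closed balls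
are exactly the products `B(x,r) × B(x',r)`), with the convention `0 ⬝ ∞ = ∞ ⬝ 0 = 0`. -/
def prodPre (ξ : Set X → ℝ≥0∞) (ξ' : Set X' → ℝ≥0∞) : Set (X × X') → ℝ≥0∞ :=
  fun S => ξ (Prod.fst '' S) * ξ' (Prod.snd '' S)

/-- Two sets are (positively) separated: `inf {ρ(x,y) : x ∈ E, y ∈ F} > 0`. -/
def SepSets (E F : Set X) : Prop := 0 < ⨅ x ∈ E, ⨅ y ∈ F, edist x y

/-- The upper `(q,ξ)`-density of `ν` at `x` with respect to `μ`:
`limsup_{r → 0⁺} ν(B(x,r)) / (μ(B(x,r))^q ξ(B(x,r)))`. -/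
def upperDensity (μ : Measure X) (q : ℝ) (ξ : Set X → ℝ≥0∞) (x : X) (ν : Measure X) : ℝ≥0∞ :=
  limsup (fun r : ℝ => ν (closedBall x r) / ballWeight μ q ξ (closedBall x r))
    (nhdsWithin 0 (Ioi 0))

/-- A Hausdorff function: right continuous, monotone increasing `h : [0,∞] → [0,∞]` with
`h(0) = 0` and `h(r) > 0` for `r > 0`. -/
def IsHausdorffFunction (h : ℝ≥0∞ → ℝ≥0∞) : Prop :=
  Monotone h ∧ h 0 = 0 ∧ (∀ r : ℝ≥0∞, 0 < r → 0 < h r) ∧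
    ∀ r : ℝ≥0∞, ContinuousWithinAt h (Ici r) r

/-- The premeasure `ξ_h` induced by a Hausdorff function: `ξ_h(B) = h(diam B)` for `B ≠ ∅`,
`ξ_h(∅) = 0`. -/
def hausPre (h : ℝ≥0∞ → ℝ≥0∞) : Set X → ℝ≥0∞ :=
  fun B => if B = ∅ then 0 else h (EMetric.diam B)

end Defs

/-!
Serve the balls `B i` of a weighted cover in order of decreasing dyadic size of their radii, giving
each a share of length at most `2 w i` of the unit interval, disjoint from the shares of the earlier
balls that it meets. If `∑ {w i : x ∈ B i} ≥ 1`, then some ball containing `x` gets less than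
`2 w i`, since otherwise disjoint shares of total length at least `2` would fit into `[0, 1]`; so it
and the earlier balls meeting it exhaust `[0, 1]`. Hence, for each `t ∈ [0, 1]`, the 5-fold
enlargements of the balls whose share contains `t` cover all such `x`, and averaging over `t` yields
one subfamily whose cost is at most twice the weighted one. The doubling conditions absorb the
factor 5. For `q > 0` doubling of `μ` is only available on its support, but a set on which `W` is
finite is separable, so its part outside the support is covered at zero cost by null balls.
-/

open scoped Topology

section Allocation

lemma continuous_measure_Iic (ν : Measure ℝ) [IsFiniteMeasure ν] [NullSingletonClass ν] :
    Continuous fun s => ν (Iic s) := by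
  have h_primitive (s : ℝ) : ν.real (Iic s) = ν.real (Iic 0) + ∫ _ in (0 : ℝ)..s, (1 : ℝ) ∂ν := by
    rw [← intervalIntegral.integral_Iic_sub_Iic integrableOn_const integrableOn_const]
    simp
  have h_real : Continuous fun s => ν.real (Iic s) := by
    rw [funext h_primitive]
    exact continuous_const.add
      (intervalIntegral.continuous_primitive (fun _ _ => intervalIntegrable_const) 0)
  exact (ENNReal.continuous_ofReal.comp h_real).congr fun s => ofReal_measureReal

lemma exists_measure_Iic_eq (ν : Measure ℝ) [IsFiniteMeasure ν] [NullSingletonClass ν] {m : ℝ≥0∞}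
    (hm_pos : 0 < m) (hm_lt : m < ν univ) : ∃ s, ν (Iic s) = m := by
  have h_bot : Tendsto (fun s => ν (Iic s)) atBot (𝓝 0) := by
    have h := tendsto_measure_iInter_atBot (μ := ν) (s := Iic)
      (fun _ => measurableSet_Iic.nullMeasurableSet) monotone_Iic ⟨0, measure_ne_top _ _⟩
    rwa [iInter_Iic_eq_empty_iff.2 (by simp [not_bddBelow_univ]), measure_empty] at h
  obtain ⟨a, ha⟩ := (h_bot.eventually_lt_const hm_pos).exists
  obtain ⟨b, hb⟩ := ((tendsto_measure_Iic_atTop ν).eventually_const_lt hm_lt).exists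
  exact mem_range_of_exists_le_of_exists_ge (continuous_measure_Iic ν) ⟨a, ha.le⟩ ⟨b, hb.le⟩

lemma exists_measurableSet_subset_measure_eq (P : Measure ℝ) [IsFiniteMeasure P]
    [NullSingletonClass P] {A : Set ℝ} (hA : MeasurableSet A) {m : ℝ≥0∞} (hm : m ≤ P A) :
    ∃ T ⊆ A, MeasurableSet T ∧ P T = m := by
  rcases eq_zero_or_pos m with rfl | hm_pos
  · exact ⟨∅, empty_subset A, MeasurableSet.empty, measure_empty⟩
  rcases hm.eq_or_lt with rfl | hm_lt
  · exact ⟨A, Subset.rfl, hA, rfl⟩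
  obtain ⟨s, hs⟩ := exists_measure_Iic_eq (P.restrict A) hm_pos (by simpa using hm_lt)
  rw [Measure.restrict_apply measurableSet_Iic] at hs
  exact ⟨Iic s ∩ A, inter_subset_right, measurableSet_Iic.inter hA, hs⟩

variable {ι Ω : Type*} [MeasurableSpace Ω]

/-- A greedy allocation of the points of a measure space `(Ω, P)` to clients `i : ι` with demands
`w i`: clients in conflict (`S j i`, with `j` served before `i`) receive disjoint shares, and a
client whose demand is not met exactly receives everything its predecessors in conflict left. -/
structure IsGreedyAllocation (P : Measure Ω) (S : ι → ι → Prop) (w : ι → ℝ≥0∞)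
    (T : ι → Set Ω) : Prop where
  measurableSet : ∀ i, MeasurableSet (T i)
  measure_le : ∀ i, P (T i) ≤ w i
  disjoint : ∀ i j, S j i → Disjoint (T j) (T i)
  measure_eq_or_exhausts : ∀ i, P (T i) = w i ∨ ∀ t, ∃ j, (j = i ∨ S j i) ∧ t ∈ T j

lemma exists_isGreedyAllocation [Countable ι] {S : ι → ι → Prop} (hS : WellFounded S)
    (P : Measure ℝ) [IsFiniteMeasure P] [NullSingletonClass P] (w : ι → ℝ≥0∞) :
    ∃ T, IsGreedyAllocation P S w T := by
  have h_share (A : Set ℝ) (m : ℝ≥0∞) (hA : MeasurableSet A) :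
      ∃ T ⊆ A, MeasurableSet T ∧ P T ≤ m ∧ (P T = m ∨ T = A) := by
    rcases le_total m (P A) with hm | hm
    · obtain ⟨T, hTA, hT, hTm⟩ := exists_measurableSet_subset_measure_eq P hA hm
      exact ⟨T, hTA, hT, hTm.le, Or.inl hTm⟩
    · exact ⟨A, Subset.rfl, hA, hm, Or.inr rfl⟩
  choose! share share_subset share_meas share_le share_eq using h_share
  let T : ι → Set ℝ := hS.fix fun i T => share (⋃ j, ⋃ h : S j i, T j h)ᶜ (w i)
  let free (i : ι) : Set ℝ := (⋃ j, ⋃ _ : S j i, T j)ᶜ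
  have hT (i : ι) : T i = share (free i) (w i) := hS.fix_eq _ i
  have h_free_of (i : ι) (h : ∀ j, S j i → MeasurableSet (T j)) : MeasurableSet (free i) :=
    (MeasurableSet.iUnion fun j => MeasurableSet.iUnion (h j)).compl
  have hT_meas (i : ι) : MeasurableSet (T i) := by
    induction i using hS.induction with
    | _ i ih => exact hT i ▸ share_meas _ _ (h_free_of i ih)
  have h_free (i : ι) : MeasurableSet (free i) := h_free_of i fun j _ => hT_meas j
  refine ⟨T, hT_meas, fun i => hT i ▸ share_le _ _ (h_free i), fun i j hji => ?_, fun i => ?_⟩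
  · have h_sub : T i ⊆ free i := hT i ▸ share_subset _ _ (h_free i)
    exact (subset_compl_iff_disjoint_left.1 h_sub).mono_left
      (subset_iUnion₂ (s := fun j (_ : S j i) => T j) j hji)
  · refine (share_eq _ (w i) (h_free i)).imp (hT i ▸ ·) fun h_eq t => ?_
    by_cases ht : t ∈ T i
    · exact ⟨i, Or.inl rfl, ht⟩
    · rw [hT i, h_eq, notMem_compl_iff] at ht
      obtain ⟨j, hji, htj⟩ := mem_iUnion₂.1 ht
      exact ⟨j, Or.inr hji, htj⟩

lemma IsGreedyAllocation.tsum_measure_le {P : Measure Ω} {S : ι → ι → Prop} {w : ι → ℝ≥0∞}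
    {T : ι → Set Ω} (hT : IsGreedyAllocation P S w T) {s : Set ι}
    (hs : s.Pairwise fun i j => S i j ∨ S j i) : ∑' i : s, P (T i) ≤ P univ := by
  refine (tsum_meas_le_meas_iUnion_of_disjoint P (fun i : s => hT.measurableSet i)
    fun i j hij => ?_).trans (measure_mono (subset_univ _))
  rcases hs i.2 j.2 (Subtype.coe_ne_coe.2 hij) with h | h
  · exact hT.disjoint j i h
  · exact (hT.disjoint i j h).symm

lemma exists_tsum_mem_le_tsum_measure_mul [Countable ι] (P : Measure Ω) [IsProbabilityMeasure P]
    {T : ι → Set Ω} (hT : ∀ i, MeasurableSet (T i)) (g : ι → ℝ≥0∞) :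
    ∃ t, ∑' i : {i | t ∈ T i}, g i ≤ ∑' i, P (T i) * g i := by
  have h_meas (i : ι) : Measurable ((T i).indicator fun _ => g i) :=
    measurable_const.indicator (hT i)
  have h_tsum : Measurable fun t => ∑' i, (T i).indicator (fun _ => g i) t := .tsum h_meas
  obtain ⟨t, ht⟩ := exists_le_lintegral (μ := P) h_tsum.aemeasurable
  refine ⟨t, ?_⟩
  calc ∑' i : {i | t ∈ T i}, g i = ∑' i, (T i).indicator (fun _ => g i) t := by
        simp only [tsum_subtype, indicator_apply, mem_ofPred_eq]
    _ ≤ ∫⁻ t, ∑' i, (T i).indicator (fun _ => g i) t ∂P := ht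
    _ = ∑' i, P (T i) * g i := by
        rw [lintegral_tsum fun i => (h_meas i).aemeasurable]
        simp only [lintegral_indicator_const (hT _), mul_comm]

end Allocation

section WeightedCovering

variable {ι : Type*}

theorem exists_subfamily_of_one_le_tsum [Countable ι] (B : ι → Set X) (R : ι → ι → Prop)
    [IsWellOrder ι R] (w g : ι → ℝ≥0∞) :
    ∃ J : Set ι, ∑' i : J, g i ≤ 2 * ∑' i, w i * g i ∧
      ∀ x, 1 ≤ ∑' i : {i | x ∈ B i}, w i →
        ∃ i, x ∈ B i ∧ ∃ j ∈ J, (j = i ∨ R j i) ∧ (B j ∩ B i).Nonempty := by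
  let P : Measure ℝ := volume.restrict (Icc 0 1)
  have : IsProbabilityMeasure P := ⟨by simp [P]⟩
  let S (j i : ι) : Prop := R j i ∧ (B j ∩ B i).Nonempty
  have hS : WellFounded S :=
    Subrelation.wf (r := R) (fun h => h.1) IsWellFounded.wf
  obtain ⟨T, hT⟩ := exists_isGreedyAllocation hS P fun i => 2 * w i
  obtain ⟨t, ht⟩ := exists_tsum_mem_le_tsum_measure_mul P hT.measurableSet g
  refine ⟨{i | t ∈ T i}, ht.trans ?_, fun x hx => ?_⟩
  · rw [← ENNReal.tsum_mul_left]
    refine ENNReal.tsum_le_tsum fun i => ?_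
    rw [← mul_assoc]
    gcongr
    exact hT.measure_le i
  have h_comparable : {i | x ∈ B i}.Pairwise fun i j => S i j ∨ S j i := fun i hi j hj hij =>
    (trichotomous_of R i j).imp (⟨·, x, hi, hj⟩) fun h => ⟨h.resolve_left hij, x, hj, hi⟩
  obtain ⟨i, hxi, hi⟩ : ∃ i, x ∈ B i ∧ P (T i) ≠ 2 * w i := by
    by_contra! h_all
    have : (2 : ℝ≥0∞) ≤ 1 := calc
      (2 : ℝ≥0∞) ≤ 2 * ∑' i : {i | x ∈ B i}, w i := le_mul_of_one_le_right' hx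
      _ = ∑' i : {i | x ∈ B i}, P (T i) := by
        rw [← ENNReal.tsum_mul_left]
        exact tsum_congr fun i => (h_all i i.2).symm
      _ ≤ P univ := hT.tsum_measure_le h_comparable
      _ = 1 := measure_univ
    exact absurd this (by norm_num)
  obtain ⟨j, hji, htj⟩ := (hT.measure_eq_or_exhausts i).resolve_left hi t
  refine ⟨i, hxi, j, htj, hji.imp_right And.left, ?_⟩
  rcases hji with rfl | hji
  · exact ⟨x, hxi, hxi⟩
  · exact hji.2

lemma exists_dyadic_level {r : ι → ℝ} {D : ℝ} (hr : ∀ i, r i ≤ D) :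
    ∃ level : ι → ℕ∞, ∀ i j, level j ≤ level i → 0 ≤ r j → r i ≤ 2 * r j := by
  refine ⟨fun i => if 0 < r i then Nat.log 2 ⌊D / r i⌋₊ else ⊤, fun i j hji hj => ?_⟩
  by_cases hi : 0 < r i
  swap
  · linarith
  by_cases hj' : 0 < r j
  swap
  · simp [hi, hj'] at hji
  simp only [hi, hj', if_true, Nat.cast_le] at hji
  have hD : 0 < D := hi.trans_le (hr i)
  have h_floor : ⌊D / r i⌋₊ ≠ 0 :=
    (Nat.floor_pos.2 ((one_le_div hi).2 (hr i))).ne'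
  have h_lt : D / r j < 2 * (D / r i) := calc
    D / r j < ⌊D / r j⌋₊ + 1 := Nat.lt_floor_add_one _
    _ ≤ 2 ^ (Nat.log 2 ⌊D / r j⌋₊ + 1) :=
      mod_cast Nat.lt_pow_succ_log_self one_lt_two ⌊D / r j⌋₊
    _ ≤ 2 * 2 ^ Nat.log 2 ⌊D / r i⌋₊ := by
      rw [pow_succ']
      gcongr
      norm_num
    _ ≤ 2 * ⌊D / r i⌋₊ := by
      gcongr
      exact_mod_cast Nat.pow_log_le_self 2 h_floor
    _ ≤ 2 * (D / r i) := by
      gcongr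
      exact Nat.floor_le (by positivity)
  rw [← mul_div_assoc, div_lt_div_iff₀ hj' hi] at h_lt
  nlinarith

lemma exists_isWellOrder_le_two_mul {r : ι → ℝ} {D : ℝ} (hr : ∀ i, r i ≤ D) :
    ∃ R : ι → ι → Prop, IsWellOrder ι R ∧ ∀ i j, R j i → 0 ≤ r j → r i ≤ 2 * r j := by
  obtain ⟨level, h_level⟩ := exists_dyadic_level hr
  let key (i : ι) : ℕ∞ × ι := (level i, i)
  have h_key : Function.Injective key := fun i j h => congrArg Prod.snd h
  let R : ι → ι → Prop := key ⁻¹'o Prod.Lex (· < ·) WellOrderingRel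
  refine ⟨R, (RelEmbedding.preimage ⟨key, h_key⟩ _).isWellOrder, fun i j hji => h_level i j ?_⟩
  rcases Prod.lex_def.1 hji with h | h
  · exact h.le
  · exact h.1.le

theorem exists_subfamily_closedBall_five_mul [PseudoMetricSpace X] [Countable ι] (c : ι → X)
    {r : ι → ℝ} {D : ℝ} (hr : ∀ i, r i ≤ D) (w g : ι → ℝ≥0∞) :
    ∃ J : Set ι, ∑' i : J, g i ≤ 2 * ∑' i, w i * g i ∧
      ∀ x, 1 ≤ ∑' i : {i | x ∈ closedBall (c i) (r i)}, w i →
        ∃ j ∈ J, x ∈ closedBall (c j) (5 * r j) := by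
  obtain ⟨R, _, hR⟩ := exists_isWellOrder_le_two_mul hr
  obtain ⟨J, hJ_sum, hJ⟩ :=
    exists_subfamily_of_one_le_tsum (fun i => closedBall (c i) (r i)) R w g
  refine ⟨J, hJ_sum, fun x hx => ?_⟩
  obtain ⟨i, hxi, j, hj, hji, z, hzj, hzi⟩ := hJ x hx
  have hj_nonneg : 0 ≤ r j := nonneg_of_mem_closedBall hzj
  have h_radius : r i ≤ 2 * r j := by
    rcases hji with rfl | hji
    · linarith
    · exact hR i j hji hj_nonneg
  refine ⟨j, hj, ?_⟩
  calc dist x (c j) ≤ dist x (c i) + dist (c i) z + dist z (c j) := dist_triangle4 ..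
    _ ≤ r i + r i + r j := by
      gcongr
      exacts [hxi, mem_closedBall'.1 hzi, hzj]
    _ ≤ 5 * r j := by linarith

end WeightedCovering

section Blanketed

lemma epow_anti {q : ℝ} (hq : q ≤ 0) : Antitone fun x => epow x q := by
  intro x y hxy
  rcases eq_zero_or_pos x with rfl | hx
  · simp [epow, hq]
  · have h_inv (z : ℝ≥0∞) : z ^ q = (z ^ (-q))⁻¹ := by rw [ENNReal.rpow_neg, inv_inv]
    simp only [epow, hx.ne', (hx.trans_le hxy).ne', false_and, if_false, h_inv]
    exact ENNReal.inv_le_inv.2 (ENNReal.rpow_le_rpow hxy (neg_nonneg.2 hq))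

lemma epow_of_pos {q : ℝ} (hq : 0 < q) (x : ℝ≥0∞) : epow x q = x ^ q := by
  simp [epow, hq.not_ge]

variable [PseudoMetricSpace X]

/-- `φ(B(x, a r)) ≤ C φ(B(x, r))` for all `x ∈ F` and all sufficiently small `r > 0`: the common
form of the doubling conditions on premeasures, on measures and on the ball weights
`μ(B)^q ξ(B)`. The range of `r` is uniform in `x`. -/
def BlanketedOn (φ : Set X → ℝ≥0∞) (a : ℝ) (C : ℝ≥0) (F : Set X) : Prop :=
  ∀ᶠ r in 𝓝[>] 0, ∀ x ∈ F, φ (closedBall x (a * r)) ≤ C * φ (closedBall x r)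

namespace BlanketedOn

variable {φ : Set X → ℝ≥0∞} {a b : ℝ} {C : ℝ≥0} {F G : Set X}

lemma mono_set (h : BlanketedOn φ a C G) (hFG : F ⊆ G) : BlanketedOn φ a C F :=
  h.mono fun _ hr x hx => hr x (hFG hx)

lemma pow (h : BlanketedOn φ a C F) (ha : 0 < a) (n : ℕ) : BlanketedOn φ (a ^ n) (C ^ n) F := by
  induction n with
  | zero => simp [BlanketedOn]
  | succ n ih =>
    have h_scale : Tendsto (fun r : ℝ => a ^ n * r) (𝓝[>] 0) (𝓝[>] 0) := by
      refine tendsto_nhdsWithin_iff.2 ⟨?_, ?_⟩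
      · exact ((continuous_const_mul (a ^ n)).tendsto' 0 0 (mul_zero _)).mono_left
          nhdsWithin_le_nhds
      · filter_upwards [self_mem_nhdsWithin] with r hr using mul_pos (pow_pos ha n) hr
    filter_upwards [h_scale.eventually h, ih] with r h_step h_ih x hx
    calc φ (closedBall x (a ^ (n + 1) * r)) = φ (closedBall x (a * (a ^ n * r))) := by ring_nf
      _ ≤ C * φ (closedBall x (a ^ n * r)) := h_step x hx
      _ ≤ C * ((C ^ n : ℝ≥0) * φ (closedBall x r)) := by
        gcongr
        exact h_ih x hx
      _ = (C ^ (n + 1) : ℝ≥0) * φ (closedBall x r) := by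
        push_cast
        ring

lemma mono_factor (h : BlanketedOn φ a C F)
    (hφ : ∀ x, Monotone fun r => φ (closedBall x r)) (hba : b ≤ a) : BlanketedOn φ b C F := by
  filter_upwards [h, self_mem_nhdsWithin] with r hr hr_pos x hx
  exact (hφ x (mul_le_mul_of_nonneg_right hba (le_of_lt hr_pos))).trans (hr x hx)

lemma exists_of_one_lt (h : BlanketedOn φ a C F) (ha : 1 < a)
    (hφ : ∀ x, Monotone fun r => φ (closedBall x r)) (b : ℝ) : ∃ C', BlanketedOn φ b C' F := by
  obtain ⟨n, hn⟩ := pow_unbounded_of_one_lt b ha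
  exact ⟨C ^ n, (h.pow (zero_lt_one.trans ha) n).mono_factor hφ hn.le⟩

variable {ξ : Set X → ℝ≥0∞} {q : ℝ} {M : ℝ≥0} [MeasurableSpace X] {μ : Measure X}

lemma ballWeight_of_nonpos (hξ : BlanketedOn ξ a C F) (ha : 1 ≤ a) (hq : q ≤ 0) :
    BlanketedOn (ballWeight μ q ξ) a C F := by
  filter_upwards [hξ, self_mem_nhdsWithin] with r hr hr_pos x hx
  have h_sub : closedBall x r ⊆ closedBall x (a * r) :=
    closedBall_subset_closedBall (le_mul_of_one_le_left (le_of_lt hr_pos) ha)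
  calc epow (μ (closedBall x (a * r))) q * ξ (closedBall x (a * r))
      ≤ epow (μ (closedBall x r)) q * (C * ξ (closedBall x r)) :=
        mul_le_mul' (epow_anti hq (measure_mono h_sub)) (hr x hx)
    _ = C * ballWeight μ q ξ (closedBall x r) := mul_left_comm ..

lemma ballWeight_of_pos (hμ : BlanketedOn μ a M F) (hξ : BlanketedOn ξ a C F) (hq : 0 < q) :
    BlanketedOn (ballWeight μ q ξ) a (M ^ q * C) F := by
  filter_upwards [hμ, hξ] with r hμr hξr x hx
  simp only [ballWeight, epow_of_pos hq]
  calc μ (closedBall x (a * r)) ^ q * ξ (closedBall x (a * r))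
      ≤ (M * μ (closedBall x r)) ^ q * (C * ξ (closedBall x r)) :=
        mul_le_mul' (ENNReal.rpow_le_rpow (hμr x hx) hq.le) (hξr x hx)
    _ = (M ^ q * C : ℝ≥0) * (μ (closedBall x r) ^ q * ξ (closedBall x r)) := by
      rw [ENNReal.mul_rpow_of_nonneg _ _ hq.le, ENNReal.coe_mul, ENNReal.coe_rpow_of_nonneg _ hq.le]
      ring

end BlanketedOn

end Blanketed

section Doubling

variable [MetricSpace X]

lemma IsPremeasure.monotone_closedBall {ξ : Set X → ℝ≥0∞} (hξ : IsPremeasure ξ) (x : X) :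
    Monotone fun r => ξ (closedBall x r) :=
  fun r s hrs => hξ.2 x r x s (closedBall_subset_closedBall hrs)

lemma PremeasureBlanketed.exists_blanketedOn {ξ : Set X → ℝ≥0∞} (hξD : PremeasureBlanketed ξ)
    (hξ : IsPremeasure ξ) (b : ℝ) (F : Set X) : ∃ C, BlanketedOn ξ b C F := by
  obtain ⟨K, -, hK⟩ := hξD
  have h_two : BlanketedOn ξ 2 K F := by
    filter_upwards [Ioc_mem_nhdsGT zero_lt_one] with r hr x _ using hK x r hr.1 hr.2
  exact h_two.exists_of_one_lt one_lt_two hξ.monotone_closedBall b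

variable [MeasurableSpace X] {μ : Measure X}

lemma MeasureBlanketed.exists_blanketedOn (hμ : MeasureBlanketed μ) (b : ℝ) :
    ∃ C, BlanketedOn μ b C (measSupport μ) := by
  obtain ⟨a, ha, h_limsup⟩ := hμ
  obtain ⟨M, h_lt_M, -⟩ := ENNReal.lt_iff_exists_nnreal_btwn.1 h_limsup
  have hM : (M : ℝ≥0∞) ≠ 0 := h_lt_M.ne_bot
  have h_a : BlanketedOn μ a M (measSupport μ) := by
    filter_upwards [eventually_lt_of_limsup_lt h_lt_M, self_mem_nhdsWithin] with r h_sup hr x hx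
    have h_ball : μ (closedBall x r) ≠ 0 :=
      ((hx r hr).trans_le (measure_mono ball_subset_closedBall)).ne'
    have h_ratio : μ (closedBall x (a * r)) / μ (closedBall x r) ≤ M :=
      (le_iSup₂ (f := fun y (_ : y ∈ measSupport μ) =>
        μ (closedBall y (a * r)) / μ (closedBall y r)) x hx).trans h_sup.le
    exact (ENNReal.div_le_iff_le_mul (Or.inl h_ball) (Or.inr hM)).1 h_ratio
  exact h_a.exists_of_one_lt ha
    (fun x r s hrs => measure_mono (closedBall_subset_closedBall hrs)) b

end Doubling

section Covers

lemma closedBall_min_eq_of_diam_le [PseudoMetricSpace X] {x : X} {r D : ℝ}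
    (h : diam (closedBall x r) ≤ D) : closedBall x (min r D) = closedBall x r := by
  refine (closedBall_subset_closedBall (min_le_left _ _)).antisymm fun y hy => ?_
  refine mem_closedBall.2 (le_min (mem_closedBall.1 hy) ?_)
  exact (dist_le_diam_of_mem isBounded_closedBall hy
    (mem_closedBall_self (nonneg_of_mem_closedBall hy))).trans h

lemma exists_isCenteredCover_tsum_eq [MetricSpace X] {ι : Type*} [Countable ι] {F : Set X} {δ : ℝ}
    {c : ι → X} {r : ι → ℝ} (hF_ne : F.Nonempty) (hδ : 0 ≤ δ) (hc : ∀ i, c i ∈ F)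
    (hr : ∀ i, diam (closedBall (c i) (r i)) ≤ 2 * δ) (hF : F ⊆ ⋃ i, closedBall (c i) (r i)) :
    ∃ c' r', IsCenteredCover F δ c' r' ∧ ∀ φ : Set X → ℝ≥0∞, φ ∅ = 0 →
      ∑' n, φ (closedBall (c' n) (r' n)) = ∑' i, φ (closedBall (c i) (r i)) := by
  obtain ⟨x₀, hx₀⟩ := hF_ne
  obtain ⟨e, he⟩ := Countable.exists_injective_nat ι
  -- Indices outside the range of `e` get the empty ball `closedBall x₀ (-1)`.
  let c' : ℕ → X := Function.extend e c fun _ => x₀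
  let r' : ℕ → ℝ := Function.extend e r fun _ => -1
  have h_mem (i : ι) : closedBall (c' (e i)) (r' (e i)) = closedBall (c i) (r i) := by
    simp only [c', r', he.extend_apply]
  have h_notMem {n : ℕ} (hn : ¬∃ i, e i = n) : closedBall (c' n) (r' n) = ∅ := by
    simp [r', Function.extend_apply' _ _ _ hn]
  refine ⟨c', r', ⟨fun n => ?_, fun n => ?_, hF.trans (iUnion_subset fun i => ?_)⟩, fun φ hφ => ?_⟩
  · by_cases hn : ∃ i, e i = n
    · obtain ⟨i, rfl⟩ := hn
      simpa only [c', he.extend_apply] using hc i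
    · simpa only [c', Function.extend_apply' _ _ _ hn] using hx₀
  · by_cases hn : ∃ i, e i = n
    · obtain ⟨i, rfl⟩ := hn
      exact (h_mem i).symm ▸ hr i
    · simpa [h_notMem hn] using hδ
  · exact h_mem i ▸ subset_iUnion (fun n => closedBall (c' n) (r' n)) (e i)
  · rw [← tsum_extend_zero he]
    refine tsum_congr fun n => ?_
    by_cases hn : ∃ i, e i = n
    · obtain ⟨i, rfl⟩ := hn
      rw [he.extend_apply, h_mem]
    · rw [Function.extend_apply' _ _ _ hn, h_notMem hn, hφ, Pi.zero_apply]

namespace IsWeightedCover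

variable [MetricSpace X] {F : Set X} {δ : ℝ} {w : ℕ → ℝ≥0} {c : ℕ → X} {r : ℕ → ℝ} {x : X}

lemma one_le_tsum_subtype (h : IsWeightedCover F δ w c r) (hx : x ∈ F) :
    1 ≤ ∑' i : {i | x ∈ closedBall (c i) (r i)}, (w i : ℝ≥0∞) := by
  rw [tsum_subtype {i | x ∈ closedBall (c i) (r i)} fun i => (w i : ℝ≥0∞)]
  simpa only [indicator_apply, mem_ofPred_eq] using h.2.2 x hx

lemma truncate (h : IsWeightedCover F δ w c r) :
    IsWeightedCover F δ w c fun i => min (r i) (2 * δ) := by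
  simpa only [IsWeightedCover, closedBall_min_eq_of_diam_le (h.2.1 _)] using h

lemma exists_dist_le (h : IsWeightedCover F δ w c r) (hx : x ∈ F) :
    ∃ i, dist x (c i) ≤ 2 * δ := by
  obtain ⟨i, hi⟩ : ∃ i, x ∈ closedBall (c i) (r i) := by
    by_contra! h_none
    simpa [h_none] using h.2.2 x hx
  exact ⟨i, (dist_le_diam_of_mem isBounded_closedBall hi
    (mem_closedBall_self (nonneg_of_mem_closedBall hi))).trans (h.2.1 i)⟩

end IsWeightedCover

end Covers

section Comparison

variable [MetricSpace X] [MeasurableSpace X] {μ : Measure X} {q δ : ℝ} {ξ : Set X → ℝ≥0∞}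
  {E F G : Set X}

lemma Hd_le_H0 (hδ : 0 < δ) : Hd μ q ξ δ F ≤ H0 μ q ξ F :=
  le_iSup₂ (f := fun δ (_ : 0 < δ) => Hd μ q ξ δ F) δ hδ

lemma Wd_le_W0 (hδ : 0 < δ) : Wd μ q ξ δ F ≤ W0 μ q ξ F :=
  le_iSup₂ (f := fun δ (_ : 0 < δ) => Wd μ q ξ δ F) δ hδ

lemma W0_le_WM (hFE : F ⊆ E) : W0 μ q ξ F ≤ WM μ q ξ E :=
  le_iSup₂ (f := fun F (_ : F ⊆ E) => W0 μ q ξ F) F hFE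

lemma ballWeight_empty (hξ : IsPremeasure ξ) : ballWeight μ q ξ ∅ = 0 := by
  simp [ballWeight, hξ.1]

lemma Hd_le_tsum {ι : Type*} [Countable ι] (hξ : IsPremeasure ξ) (hδ : 0 ≤ δ) {c : ι → X}
    {r : ι → ℝ} (hc : ∀ i, c i ∈ F) (hr : ∀ i, diam (closedBall (c i) (r i)) ≤ 2 * δ)
    (hF : F ⊆ ⋃ i, closedBall (c i) (r i)) :
    Hd μ q ξ δ F ≤ ∑' i, ballWeight μ q ξ (closedBall (c i) (r i)) := by
  rcases F.eq_empty_or_nonempty with rfl | hF_ne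
  · simp [Hd]
  obtain ⟨c', r', h_cover, h_sum⟩ := exists_isCenteredCover_tsum_eq hF_ne hδ hc hr hF
  rw [Hd, if_neg hF_ne.ne_empty, ← h_sum _ (ballWeight_empty hξ)]
  exact iInf₂_le_of_le c' r' (iInf_le _ h_cover)

lemma Wd_le_Hd (μ : Measure X) (q : ℝ) (ξ : Set X → ℝ≥0∞) (δ : ℝ) (F : Set X) :
    Wd μ q ξ δ F ≤ Hd μ q ξ δ F := by
  by_cases hF : F = ∅
  · simp [Wd, hF]
  simp only [Wd, Hd, hF, if_false]
  refine le_iInf₂ fun c r => le_iInf fun hcr => ?_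
  have h_weighted : IsWeightedCover F δ (fun _ => 1) c r := by
    refine ⟨hcr.1, hcr.2.1, fun x hx => ?_⟩
    obtain ⟨i, hi⟩ := mem_iUnion.1 (hcr.2.2 hx)
    calc (1 : ℝ≥0∞) = if x ∈ closedBall (c i) (r i) then ((1 : ℝ≥0) : ℝ≥0∞) else 0 := by simp [hi]
      _ ≤ _ := ENNReal.le_tsum i
  exact iInf_le_of_le _ (iInf₂_le_of_le c r (iInf_le_of_le h_weighted (by simp)))

lemma WM_le_HM (μ : Measure X) (q : ℝ) (ξ : Set X → ℝ≥0∞) (E : Set X) :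
    WM μ q ξ E ≤ HM μ q ξ E :=
  iSup₂_mono fun F _ => iSup₂_mono fun δ _ => Wd_le_Hd μ q ξ δ F

lemma Hd_union_le (hξ : IsPremeasure ξ) (hδ : 0 ≤ δ) :
    Hd μ q ξ δ (F ∪ G) ≤ Hd μ q ξ δ F + Hd μ q ξ δ G := by
  rcases eq_or_ne F ∅ with rfl | hF
  · simp
  rcases eq_or_ne G ∅ with rfl | hG
  · simp
  conv_rhs => rw [Hd, Hd, if_neg hF, if_neg hG]
  simp only [ENNReal.iInf_add, ENNReal.add_iInf]
  refine le_iInf₂ fun c' r' => le_iInf fun h' => le_iInf₂ fun c r => le_iInf fun h => ?_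
  have h_cover := Hd_le_tsum (μ := μ) (q := q) (F := F ∪ G) hξ hδ (c := Sum.elim c c')
    (r := Sum.elim r r') (Sum.forall.2 ⟨fun i => Or.inl (h.1 i), fun i => Or.inr (h'.1 i)⟩)
    (Sum.forall.2 ⟨h.2.1, h'.2.1⟩)
    (by simpa only [iUnion_sum, Sum.elim_inl, Sum.elim_inr] using union_subset_union h.2.2 h'.2.2)
  simpa only [ENNReal.summable.tsum_sum ENNReal.summable, Sum.elim_inl, Sum.elim_inr] using h_cover

lemma H0_union_le (hξ : IsPremeasure ξ) : H0 μ q ξ (F ∪ G) ≤ H0 μ q ξ F + H0 μ q ξ G :=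
  iSup₂_le fun _ hδ => (Hd_union_le hξ hδ.le).trans (add_le_add (Hd_le_H0 hδ) (Hd_le_H0 hδ))

lemma exists_closedBall_measure_eq_zero {x : X} (hx : x ∉ measSupport μ) (hδ : 0 < δ) :
    ∃ r, 0 < r ∧ r ≤ δ ∧ μ (closedBall x r) = 0 := by
  obtain ⟨s, hs, h_null⟩ : ∃ s, 0 < s ∧ μ (ball x s) = 0 := by
    simpa [measSupport] using hx
  refine ⟨min (s / 2) δ, lt_min (half_pos hs) hδ, min_le_right _ _, measure_mono_null ?_ h_null⟩
  exact closedBall_subset_ball ((min_le_left _ _).trans_lt (half_lt_self hs))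

lemma Hd_eq_zero_of_disjoint_measSupport (hξ : IsPremeasure ξ) (hq : 0 < q) (hδ : 0 < δ)
    (hF : IsSeparable F) (hF_supp : Disjoint F (measSupport μ)) : Hd μ q ξ δ F = 0 := by
  have h_null (x : F) : ∃ r, 0 < r ∧ r ≤ δ ∧ μ (closedBall (x : X) r) = 0 :=
    exists_closedBall_measure_eq_zero (disjoint_left.1 hF_supp x.2) hδ
  choose r hr_pos hr_le hr_null using h_null
  have := hF.secondCountableTopology
  obtain ⟨t, ht, h_univ⟩ :=
    TopologicalSpace.countable_cover_nhds fun x : F => closedBall_mem_nhds x (hr_pos x)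
  have := ht.to_subtype
  refine le_antisymm ?_ bot_le
  calc Hd μ q ξ δ F ≤ ∑' x : t, ballWeight μ q ξ (closedBall (x : X) (r x)) := by
        refine Hd_le_tsum hξ hδ.le (fun x => x.1.2) (fun x => ?_) fun y hy => ?_
        · exact (diam_closedBall (hr_pos x).le).trans (by gcongr; exact hr_le x)
        · obtain ⟨x, hx, hyx⟩ := mem_iUnion₂.1 (h_univ.symm ▸ mem_univ (⟨y, hy⟩ : F))
          exact mem_iUnion.2 ⟨⟨x, hx⟩, hyx⟩
    _ = 0 := by simp [ballWeight, epow_of_pos hq, hr_null, hq]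

lemma H0_le_H0_inter_measSupport (hξ : IsPremeasure ξ) (hq : 0 < q) (hF : IsSeparable F) :
    H0 μ q ξ F ≤ H0 μ q ξ (F ∩ measSupport μ) := by
  have h_null : H0 μ q ξ (F \ measSupport μ) = 0 := by
    simp only [H0, ENNReal.iSup_eq_zero]
    exact fun δ hδ => Hd_eq_zero_of_disjoint_measSupport hξ hq hδ (hF.mono sdiff_subset)
      disjoint_sdiff_left
  simpa only [inter_union_sdiff, h_null, add_zero] using
    H0_union_le (μ := μ) (q := q) (F := F ∩ measSupport μ) (G := F \ measSupport μ) hξ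

lemma exists_isWeightedCover_of_Wd_ne_top (hF : F.Nonempty) (h : Wd μ q ξ δ F ≠ ∞) :
    ∃ w c r, IsWeightedCover F δ w c r := by
  by_contra! h_none
  exact h (by simp [Wd, hF.ne_empty, h_none])

lemma isSeparable_of_W0_ne_top (h : W0 μ q ξ F ≠ ∞) : IsSeparable F := by
  rcases F.eq_empty_or_nonempty with rfl | hF
  · exact countable_empty.isSeparable
  have h_cover (n : ℕ) : ∃ w c r, IsWeightedCover F (1 / (n + 1)) w c r :=
    exists_isWeightedCover_of_Wd_ne_top hF <|
      ne_top_of_le_ne_top h (Wd_le_W0 Nat.one_div_pos_of_nat)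
  choose w c r h_cover using h_cover
  refine ⟨range fun p : ℕ × ℕ => c p.1 p.2, countable_range _, fun x hx => ?_⟩
  refine Metric.mem_closure_range_iff.2 fun ε hε => ?_
  obtain ⟨n, hn⟩ := exists_nat_one_div_lt (half_pos hε)
  obtain ⟨i, hi⟩ := (h_cover n).exists_dist_le hx
  exact ⟨(n, i), hi.trans_lt (by linarith)⟩

lemma ballWeight_closedBall_mul_le {x : X} {a η ρ : ℝ} {C : ℝ≥0} (hξ : IsPremeasure ξ)
    (ha : 0 < a) (hx : ∀ s ∈ Ioc 0 η,
      ballWeight μ q ξ (closedBall x (a * s)) ≤ C * ballWeight μ q ξ (closedBall x s))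
    (hρ : ρ ≤ η) :
    ballWeight μ q ξ (closedBall x (a * ρ)) ≤ max 1 C * ballWeight μ q ξ (closedBall x ρ) := by
  rcases lt_trichotomy ρ 0 with h_neg | rfl | h_pos
  · simp [closedBall_eq_empty.2 (mul_neg_of_pos_of_neg ha h_neg), ballWeight_empty hξ]
  · rw [mul_zero]
    exact le_mul_of_one_le_left' (ENNReal.one_le_coe_iff.2 (le_max_left 1 C))
  · exact (hx ρ ⟨h_pos, hρ⟩).trans (by gcongr; exact le_max_right 1 C)

lemma Hd_le_of_isWeightedCover {w : ℕ → ℝ≥0} {c : ℕ → X} {r : ℕ → ℝ} {η : ℝ} {C : ℝ≥0}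
    (hξ : IsPremeasure ξ) (hδ : 0 ≤ δ) (hη : 10 * η ≤ δ) (h_cover : IsWeightedCover F η w c r)
    (hF : ∀ x ∈ F, ∀ s ∈ Ioc 0 (2 * η),
      ballWeight μ q ξ (closedBall x (5 * s)) ≤ C * ballWeight μ q ξ (closedBall x s)) :
    Hd μ q ξ δ F ≤ 2 * max 1 C * ∑' i, w i * ballWeight μ q ξ (closedBall (c i) (r i)) := by
  -- The radius of a ball of small diameter may be large; truncate it.
  let r' (i : ℕ) : ℝ := min (r i) (2 * η)
  have h_ball (i : ℕ) : closedBall (c i) (r' i) = closedBall (c i) (r i) :=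
    closedBall_min_eq_of_diam_le (h_cover.2.1 i)
  have hr' (i : ℕ) : r' i ≤ 2 * η := min_le_right _ _
  let g (i : ℕ) : ℝ≥0∞ := ballWeight μ q ξ (closedBall (c i) (5 * r' i))
  have hg (i : ℕ) : g i ≤ max 1 C * ballWeight μ q ξ (closedBall (c i) (r i)) :=
    h_ball i ▸ ballWeight_closedBall_mul_le hξ (by norm_num) (hF _ (h_cover.1 i)) (hr' i)
  obtain ⟨J, h_cost, hJ⟩ := exists_subfamily_closedBall_five_mul c hr' (fun i => (w i : ℝ≥0∞)) g
  have h_diam (i : J) : diam (closedBall (c i) (5 * r' i)) ≤ 2 * δ := by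
    rcases lt_or_ge (r' i) 0 with h_neg | h_nonneg
    · rw [closedBall_eq_empty.2 (by linarith), diam_empty]
      positivity
    · exact (diam_closedBall (by positivity)).trans (by linarith [hr' i])
  have h_subset : F ⊆ ⋃ i : J, closedBall (c i) (5 * r' i) := fun x hx => by
    obtain ⟨j, hj, hxj⟩ := hJ x (h_cover.truncate.one_le_tsum_subtype hx)
    exact mem_iUnion.2 ⟨⟨j, hj⟩, hxj⟩
  calc Hd μ q ξ δ F ≤ ∑' i : J, g i :=
        Hd_le_tsum hξ hδ (fun i => h_cover.1 i) h_diam h_subset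
    _ ≤ 2 * ∑' i, w i * g i := h_cost
    _ ≤ 2 * ∑' i, w i * (max 1 C * ballWeight μ q ξ (closedBall (c i) (r i))) := by
      gcongr with i
      exact hg i
    _ = 2 * max 1 C * ∑' i, w i * ballWeight μ q ξ (closedBall (c i) (r i)) := by
      simp only [mul_left_comm _ ((max 1 C : ℝ≥0) : ℝ≥0∞), ENNReal.tsum_mul_left, mul_assoc]

lemma H0_le_of_blanketedOn {C : ℝ≥0} (hξ : IsPremeasure ξ)
    (hF : BlanketedOn (ballWeight μ q ξ) 5 C F) :
    H0 μ q ξ F ≤ 2 * max 1 C * W0 μ q ξ F := by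
  obtain ⟨u, hu, h_sub⟩ := mem_nhdsGT_iff_exists_Ioc_subset.1 hF
  rw [mem_Ioi] at hu
  refine iSup₂_le fun δ hδ => ?_
  obtain ⟨η, hη, hηδ, hηu⟩ : ∃ η : ℝ, 0 < η ∧ 10 * η ≤ δ ∧ 2 * η ≤ u :=
    ⟨min (δ / 10) (u / 2), by positivity, by linarith [min_le_left (δ / 10) (u / 2)],
      by linarith [min_le_right (δ / 10) (u / 2)]⟩
  have h_blanketed : ∀ x ∈ F, ∀ s ∈ Ioc 0 (2 * η),
      ballWeight μ q ξ (closedBall x (5 * s)) ≤ C * ballWeight μ q ξ (closedBall x s) :=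
    fun x hx s hs => h_sub ⟨hs.1, hs.2.trans hηu⟩ x hx
  calc Hd μ q ξ δ F ≤ 2 * max 1 C * Wd μ q ξ η F := by
        rcases eq_or_ne F ∅ with rfl | h_ne
        · simp [Hd]
        have h_pos : (2 * (max 1 C : ℝ≥0) : ℝ≥0∞) ≠ 0 := by simp
        simp only [Wd, if_neg h_ne, ENNReal.mul_iInf_of_ne h_pos (by finiteness)]
        exact le_iInf fun w => le_iInf₂ fun c r => le_iInf fun h_cover =>
          Hd_le_of_isWeightedCover hξ hδ.le hηδ h_cover h_blanketed
    _ ≤ 2 * max 1 C * W0 μ q ξ F := by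
      gcongr
      exact Wd_le_W0 hη

theorem exists_HM_le_mul_WM (μ : Measure X) (hξ : IsPremeasure ξ) (hξD : PremeasureBlanketed ξ)
    (hq : q ≤ 0 ∨ (0 < q ∧ MeasureBlanketed μ)) :
    ∃ C : ℝ≥0, 0 < C ∧ ∀ E, HM μ q ξ E ≤ C * WM μ q ξ E := by
  rcases hq with hq | ⟨hq, hμ⟩
  · obtain ⟨C, hC⟩ := hξD.exists_blanketedOn hξ 5 univ
    have h_weight := hC.ballWeight_of_nonpos (μ := μ) (by norm_num) hq
    refine ⟨2 * max 1 C, by positivity, fun E => iSup₂_le fun F hFE => ?_⟩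
    calc H0 μ q ξ F ≤ 2 * max 1 C * W0 μ q ξ F :=
          H0_le_of_blanketedOn hξ (h_weight.mono_set (subset_univ F))
      _ ≤ (2 * max 1 C : ℝ≥0) * WM μ q ξ E := mul_le_mul' (by simp) (W0_le_WM hFE)
  · obtain ⟨C, hC⟩ := hξD.exists_blanketedOn hξ 5 (measSupport μ)
    obtain ⟨M, hM⟩ := hμ.exists_blanketedOn 5
    have h_weight := hM.ballWeight_of_pos hC hq
    refine ⟨2 * max 1 (M ^ q * C), by positivity, fun E => iSup₂_le fun F hFE => ?_⟩
    rcases eq_or_ne (W0 μ q ξ F) ∞ with h_top | h_fin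
    · have hE : WM μ q ξ E = ∞ := top_unique (h_top ▸ W0_le_WM hFE)
      simp [hE]
    calc H0 μ q ξ F ≤ H0 μ q ξ (F ∩ measSupport μ) :=
          H0_le_H0_inter_measSupport hξ hq (isSeparable_of_W0_ne_top h_fin)
      _ ≤ 2 * max 1 (M ^ q * C) * W0 μ q ξ (F ∩ measSupport μ) :=
          H0_le_of_blanketedOn hξ (h_weight.mono_set inter_subset_right)
      _ ≤ (2 * max 1 (M ^ q * C) : ℝ≥0) * WM μ q ξ E :=
          mul_le_mul' (by simp) (W0_le_WM (inter_subset_left.trans hFE))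

end Comparison

theorem stmt9_general [MetricSpace X] [MeasurableSpace X] (μ : Measure X) (q : ℝ)
    (ξ : Set X → ℝ≥0∞) (hξ : IsPremeasure ξ) (hξD : PremeasureBlanketed ξ)
    (hq : q ≤ 0 ∨ (0 < q ∧ MeasureBlanketed μ)) :
    ∃ β : ℝ≥0, 0 < β ∧
      (∀ E : Set X, (β : ℝ≥0∞) * HM μ q ξ E ≤ WM μ q ξ E) ∧
      ∀ E : Set X, (HM μ q ξ E = ∞ ↔ WM μ q ξ E = ∞) := by
  obtain ⟨C, hC_pos, hC⟩ := exists_HM_le_mul_WM μ hξ hξD hq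
  refine ⟨C⁻¹, inv_pos.2 hC_pos, fun E => ?_, fun E => ⟨fun h => ?_, fun h => ?_⟩⟩
  · rw [ENNReal.coe_inv hC_pos.ne', mul_comm, ← div_eq_mul_inv]
    exact ENNReal.div_le_of_le_mul' (hC E)
  · by_contra h_fin
    exact ((hC E).trans_lt (ENNReal.mul_lt_top ENNReal.coe_lt_top (lt_top_iff_ne_top.2 h_fin))).ne h
  · exact top_unique (h ▸ WM_le_HM μ q ξ E)

section Thms

variable [MetricSpace X] [SeparableSpace X] [MeasurableSpace X] [BorelSpace X]
variable [MetricSpace X'] [SeparableSpace X'] [MeasurableSpace X'] [BorelSpace X']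

theorem stmt9 (μ : Measure X) [IsProbabilityMeasure μ]
    (q : ℝ) (ξ : Set X → ℝ≥0∞) (hξ : IsPremeasure ξ) (hξD : PremeasureBlanketed ξ)
    (hq : q ≤ 0 ∨ (0 < q ∧ MeasureBlanketed μ)) :
    ∃ β : ℝ≥0, 0 < β ∧
      (∀ E : Set X, (β : ℝ≥0∞) * HM μ q ξ E ≤ WM μ q ξ E) ∧
      ∀ E : Set X, (HM μ q ξ E = ∞ ↔ WM μ q ξ E = ∞) :=
  stmt9_general μ q ξ hξ hξD hq

end Thms
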